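/- Let x₁,…,x_N and y₁,…,y_N be points in a metric space S, and let m ≥ 1. For a 1-Lipschitz function h on the quotient space S^m_σ (metrized so that [(z₁,…,z_m)] ↦ (1/m)Σδ_{z_i} is an isometry into Wasserstein-1 space), the quantity |F_h((1/N)Σδ_{x_i}) − F_h((1/N)Σδ_{y_i})| is at most N^{-m} Σ_{i₁,…,i_m ∈ {1,…,N}} d^{(G₁)}((1/m)Σ_k δ_{x_{i_k}}, (1/m)Σ_k δ_{y_{τ(i_k)}}), where τ is any permutation of {1,…,N} and F_h(π) := ∫_{S^m} h(x) π^m(dx). -/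

import Mathlib

open MeasureTheory
open scoped ENNReal NNReal

/-- The Wasserstein (Gini–Monge–Wasserstein) distance of order 1. -/
noncomputable def wasserstein1 {X : Type*} [MeasurableSpace X] (d : X → X → ℝ≥0∞)
    (μ ν : Measure X) : ℝ≥0∞ :=
  sInf {c : ℝ≥0∞ | ∃ γ : Measure (X × X),
    γ.map Prod.fst = μ ∧ γ.map Prod.snd = ν ∧ c = ∫⁻ z, d z.1 z.2 ∂γ}

/-- The uniform empirical measure of a finite tuple of points. -/
noncomputable def empMeas {S : Type*} [MeasurableSpace S] {k : ℕ} (u : Fin k → S) :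
    Measure S :=
  (k : ℝ≥0∞)⁻¹ • ∑ i, Measure.dirac (u i)

theorem isProbabilityMeasure_empMeas {S : Type*} [MeasurableSpace S] {N : ℕ} (hN : N ≠ 0)
    (x : Fin N → S) : IsProbabilityMeasure (empMeas x) := by
  refine ⟨?_⟩
  simp only [empMeas, Measure.smul_apply, Measure.coe_finsetSum, Finset.sum_apply, measure_univ,
    Finset.sum_const, Finset.card_univ, Fintype.card_fin, smul_eq_mul, nsmul_eq_mul, mul_one]
  exact ENNReal.inv_mul_cancel (by exact_mod_cast hN) (ENNReal.natCast_ne_top N)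

/-- The `m`-fold power of an empirical measure is the empirical measure of all `m`-tuples
drawn with replacement. -/
theorem pi_empMeas {S : Type*} [MeasurableSpace S] {N : ℕ} (hN : N ≠ 0) (m : ℕ)
    (x : Fin N → S) :
    Measure.pi (fun _ : Fin m => empMeas x)
      = ((N : ℝ≥0∞)⁻¹ ^ m) • ∑ i : Fin m → Fin N, Measure.dirac (fun k => x (i k)) := by
  have := isProbabilityMeasure_empMeas hN x
  refine Measure.pi_eq fun A hA => ?_
  have hdirac (i : Fin m → Fin N) :
      Measure.dirac (fun k => x (i k)) (Set.univ.pi A)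
        = ∏ k, Measure.dirac (x (i k)) (A k) := by
    classical
    simp only [Measure.dirac_apply' _ (MeasurableSet.univ_pi hA), Measure.dirac_apply' _ (hA _),
      Set.indicator_apply, Pi.one_apply, Set.mem_univ_pi, Finset.prod_ite_zero,
      Finset.prod_const_one, Finset.mem_univ, true_imp_iff]
  simp only [empMeas, Measure.smul_apply, Measure.coe_finsetSum, Finset.sum_apply, hdirac,
    smul_eq_mul, Finset.prod_mul_distrib, Finset.prod_const, Finset.card_univ, Fintype.card_fin,
    Finset.prod_univ_sum, Fintype.piFinset_univ]

theorem integral_pi_empMeas {S : Type*} [MeasurableSpace S] {N : ℕ} (hN : N ≠ 0) (m : ℕ)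
    (x : Fin N → S) {h : (Fin m → S) → ℝ} (hmeas : Measurable h) :
    ∫ z, h z ∂(Measure.pi fun _ : Fin m => empMeas x)
      = ((N : ℝ) ^ m)⁻¹ * ∑ i : Fin m → Fin N, h (fun k => x (i k)) := by
  rw [pi_empMeas hN, integral_smul_measure, integral_finsetSum_measure]
  · simp [integral_dirac' _ _ hmeas.stronglyMeasurable]
  · intro i _
    exact integrable_dirac' hmeas.stronglyMeasurable (by simp)

/-- For points `x₁,…,x_N`, `y₁,…,y_N` in a metric space `S`, a permutation `τ` of
`{1,…,N}`, and a function `h` on `S^m` which is symmetric and 1-Lipschitz for the metric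
of the quotient `S^m_σ` (isometric to Wasserstein-1 space via empirical measures),
`|F_h((1/N)Σδ_{xᵢ}) − F_h((1/N)Σδ_{yᵢ})|
   ≤ N^{−m} Σ_{i₁,…,i_m} d^{(G₁)}((1/m)Σ_k δ_{x_{i_k}}, (1/m)Σ_k δ_{y_{τ(i_k)}})`,
where `F_h(π) := ∫_{S^m} h dπ^m`. -/
theorem stmt_12 {S : Type*} [MetricSpace S] [MeasurableSpace S] [BorelSpace S]
    (N m : ℕ) (hN : 1 ≤ N) (hm : 1 ≤ m)
    (x y : Fin N → S) (τ : Equiv.Perm (Fin N))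
    (h : (Fin m → S) → ℝ) (hmeas : Measurable h)
    (hsymm : ∀ (u : Fin m → S) (π : Equiv.Perm (Fin m)), h (u ∘ π) = h u)
    (hlip : ∀ u v : Fin m → S,
      |h u - h v| ≤ (wasserstein1 (fun a b => edist a b) (empMeas u) (empMeas v)).toReal) :
    |(∫ z, h z ∂(Measure.pi fun _ : Fin m => empMeas x))
        - ∫ z, h z ∂(Measure.pi fun _ : Fin m => empMeas y)|
      ≤ ((N : ℝ) ^ m)⁻¹ * ∑ i : Fin m → Fin N,
          (wasserstein1 (fun a b => edist a b)
            (empMeas fun k => x (i k)) (empMeas fun k => y (τ (i k)))).toReal := by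
  have hN' : N ≠ 0 := by omega
  have hreindex : ∑ i : Fin m → Fin N, h (fun k => y (i k))
      = ∑ i : Fin m → Fin N, h (fun k => y (τ (i k))) :=
    (Equiv.sum_comp (Equiv.piCongrRight fun _ : Fin m => τ)
      fun i : Fin m → Fin N => h fun k => y (i k)).symm
  rw [integral_pi_empMeas hN' m x hmeas, integral_pi_empMeas hN' m y hmeas, hreindex, ← mul_sub,
    ← Finset.sum_sub_distrib, abs_mul, abs_of_nonneg (by positivity)]
  gcongr
  exact (Finset.abs_sum_le_sum_abs _ _).trans (Finset.sum_le_sum fun i _ => hlip _ _)
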